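/- Let n, m be positive integers not both equal to 1, and let Θ be a real n×m matrix. If α(Θ) ≤ 1 and α(Θ) < m, then α(ᵗΘ) ≥ (n−1)/(m − α(Θ)); if α(Θ) ≥ 1 and m ≥ 2, then α(ᵗΘ) ≥ (n − α(Θ)^{−1})/(m−1). -/

import Mathlib

open MeasureTheory Filter Matrix

noncomputable section

/-- Geometric mean of the absolute values of the coordinates: Π(z). -/
def Pigeo {k : ℕ} (z : Fin k → ℝ) : ℝ := (∏ i, |z i|) ^ ((1:ℝ)/k)

/-- Geometric mean of `max 1 |z i|`: Π'(z). -/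
def Pigeo' {k : ℕ} (z : Fin k → ℝ) : ℝ := (∏ i, max 1 |z i|) ^ ((1:ℝ)/k)

/-- Coordinatewise cast of an integer vector to a real vector. -/
def ivec {k : ℕ} (x : Fin k → ℤ) : Fin k → ℝ := fun i => (x i : ℝ)

/-- The constant Δ_d = (2^{d-1}√d)⁻¹ · vol_{d-1}{x ∈ [-1,1]^d : x₁+⋯+x_d = 0}. -/
def Delta (d : ℕ) : ℝ :=
  ((2:ℝ) ^ (d - 1) * Real.sqrt d)⁻¹ *
    (μH[(d:ℝ) - 1] {x : EuclideanSpace ℝ (Fin d) | (∀ i, |x i| ≤ 1) ∧ ∑ i, x i = 0}).toReal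

/-- For every sufficiently large t there are x ∈ ℤ^m \ {0}, y ∈ ℤ^n with
Π'(x) ≤ t and Π(Θx − y) ≤ t^{−γ}. -/
def UnifMultApprox (n m : ℕ) (Θ : Matrix (Fin n) (Fin m) ℝ) (γ : ℝ) : Prop :=
  ∀ᶠ t : ℝ in Filter.atTop, ∃ x : Fin m → ℤ, ∃ y : Fin n → ℤ, x ≠ 0 ∧
    Pigeo' (ivec x) ≤ t ∧ Pigeo (Θ.mulVec (ivec x) - ivec y) ≤ t ^ (-γ)

/-- The uniform multiplicative Diophantine exponent α_×(Θ), as an extended real. -/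
def malpha (n m : ℕ) (Θ : Matrix (Fin n) (Fin m) ℝ) : EReal :=
  sSup {x : EReal | ∃ γ : ℝ, x = (γ : EReal) ∧ UnifMultApprox n m Θ γ}

/-- For every sufficiently large t there are x ∈ ℤ^m \ {0}, y ∈ ℤ^n with
|x|_∞ ≤ t and |Θx − y|_∞ ≤ t^{−γ}. -/
def UnifOrdApprox (n m : ℕ) (Θ : Matrix (Fin n) (Fin m) ℝ) (γ : ℝ) : Prop :=
  ∀ᶠ t : ℝ in Filter.atTop, ∃ x : Fin m → ℤ, ∃ y : Fin n → ℤ, x ≠ 0 ∧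
    ‖ivec x‖ ≤ t ∧ ‖Θ.mulVec (ivec x) - ivec y‖ ≤ t ^ (-γ)

/-- The uniform (ordinary) Diophantine exponent α(Θ), as an extended real. -/
def oalpha (n m : ℕ) (Θ : Matrix (Fin n) (Fin m) ℝ) : EReal :=
  sSup {x : EReal | ∃ γ : ℝ, x = (γ : EReal) ∧ UnifOrdApprox n m Θ γ}


/-!
For `V, Y > 0` the points `(V x, Y (Θ x - y))` with integral `x`, `y` form a lattice of covolume
`ε = V ^ m * Y ^ n`, and its dual lattice consists of the points `(V⁻¹ (ᵗΘ v - u), Y⁻¹ v)`. If the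
first lattice has a nonzero point in each box `|f| ≤ a`, `|g| ≤ ε / a` with `ε ≤ a ≤ 1`, then it
has at most two linearly independent points whose norms have product `O(ε)`: a shortest point, and
a point of the box in which a multiple of the shortest one cannot lie. Minkowski's theorem on linear
forms then gives a bounded nonzero point of the dual lattice, orthogonal to these points. Taking
`V = Y ^ (-β)` and `a = Y ^ s`, the existence of the points in the boxes follows from the
approximation property of `Θ` as soon as a linear inequality in `s` holds at one end of
`[n - m β, 0]`: the right end gives the first bound on the exponent of `ᵗΘ`, the left end the
second.
-/

theorem exists_mem_span_int_ne_zero_abs_lt {ι : Type*} [Fintype ι] [DecidableEq ι]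
    (b : Module.Basis ι ℝ (ι → ℝ)) {c : ι → ℝ} (hc : ∀ i, 0 < c i)
    (h : |(of b).det| < ∏ i, c i) :
    ∃ x ∈ Submodule.span ℤ (Set.range b), x ≠ 0 ∧ ∀ i, |x i| < c i := by
  set box : Set (ι → ℝ) := Set.univ.pi fun i => Set.Ioo (-c i) (c i)
  have mem_box {x : ι → ℝ} : x ∈ box ↔ ∀ i, |x i| < c i := by
    simp only [box, Set.mem_univ_pi, Set.mem_Ioo, abs_lt]
  have hvol : volume (ZSpan.fundamentalDomain b) * 2 ^ Module.finrank ℝ (ι → ℝ) < volume box := by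
    have two_pow : (2 : ENNReal) ^ Fintype.card ι = ENNReal.ofReal (2 ^ Fintype.card ι) := by
      rw [ENNReal.ofReal_pow zero_le_two, ENNReal.ofReal_ofNat]
    rw [ZSpan.volume_fundamentalDomain, Module.finrank_fintype_fun_eq_card, Real.volume_pi_Ioo,
      two_pow, ← ENNReal.ofReal_mul (abs_nonneg _),
      ← ENNReal.ofReal_prod_of_nonneg fun i _ => by linarith [hc i],
      ENNReal.ofReal_lt_ofReal_iff_of_nonneg (by positivity)]
    simp only [sub_neg_eq_add, ← mul_two, Finset.prod_mul_distrib, Finset.prod_const,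
      Finset.card_univ]
    gcongr
  have : Countable (Submodule.span ℤ (Set.range b)).toAddSubgroup :=
    inferInstanceAs (Countable (Submodule.span ℤ (Set.range b)))
  obtain ⟨⟨x, hxb⟩, hx0, hx⟩ := exists_ne_zero_mem_lattice_of_measure_mul_two_pow_lt_measure
    (ZSpan.isAddFundamentalDomain' b volume)
    (fun x hx => mem_box.2 fun i => by simpa using mem_box.1 hx i)
    (convex_pi fun i _ => convex_Ioo _ _) hvol
  exact ⟨x, hxb, fun h0 => hx0 (Subtype.ext h0), mem_box.1 hx⟩

theorem exists_int_ne_zero_abs_mulVec_lt {ι : Type*} [Fintype ι] [DecidableEq ι]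
    {N : Matrix ι ι ℝ} (hN : N.det ≠ 0) {c : ι → ℝ} (hc : ∀ i, 0 < c i)
    (h : |N.det| < ∏ i, c i) :
    ∃ w : ι → ℤ, w ≠ 0 ∧ ∀ i, |(N *ᵥ Int.cast ∘ w) i| < c i := by
  classical
  rw [← det_transpose] at hN h
  set b := basisOfPiSpaceOfLinearIndependent (linearIndependent_rows_of_det_ne_zero hN)
  have hb : ⇑b = Nᵀ := coe_basisOfPiSpaceOfLinearIndependent _
  obtain ⟨x, hxb, hx0, hx⟩ := exists_mem_span_int_ne_zero_abs_lt b hc (by rw [hb]; exact h)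
  obtain ⟨w, rfl⟩ := (Submodule.mem_span_range_iff_exists_fun ℤ).1 hxb
  have hw : ∑ j, w j • b j = N *ᵥ Int.cast ∘ w := by
    ext i
    simp [hb, mulVec, dotProduct, mul_comm]
  rw [hw] at hx
  exact ⟨w, by rintro rfl; simp at hx0, hx⟩

theorem abs_det_le_factorial_mul_prod_norm {κ : Type*} [Fintype κ] [DecidableEq κ]
    (A : Matrix κ κ ℝ) : |A.det| ≤ (Fintype.card κ).factorial * ∏ i, ‖A i‖ := by
  rw [← det_transpose, det_apply']
  calc |∑ σ : Equiv.Perm κ, (Equiv.Perm.sign σ : ℝ) * ∏ i, A i (σ i)|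
      ≤ ∑ σ : Equiv.Perm κ, |(Equiv.Perm.sign σ : ℝ) * ∏ i, A i (σ i)| :=
        Finset.abs_sum_le_sum_abs _ _
    _ ≤ ∑ _σ : Equiv.Perm κ, ∏ i, ‖A i‖ := Finset.sum_le_sum fun σ _ => by
        rw [abs_mul, Finset.abs_prod, ← Int.cast_abs, Int.abs_eq_natAbs, Int.units_natAbs]
        simpa using Finset.prod_le_prod (fun i _ => abs_nonneg _)
          fun i _ => norm_le_pi_norm (A i) (σ i)
    _ = (Fintype.card κ).factorial * ∏ i, ‖A i‖ := by
        rw [Finset.sum_const, Finset.card_univ, Fintype.card_perm, nsmul_eq_mul]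

theorem exists_det_submatrix_ne_zero {K κ ι : Type*} [Field K] [Fintype κ] [DecidableEq κ]
    [Finite ι] {P : Matrix κ ι K} (hP : LinearIndependent K P.row) :
    ∃ e : κ → ι, (P.submatrix id e).det ≠ 0 := by
  have := Fintype.ofFinite ι
  obtain ⟨κ', a, -, hspan, hlin⟩ := exists_linearIndependent' K P.col
  have := hlin.finite
  have := Fintype.ofFinite κ'
  have hcard : Fintype.card κ' = Fintype.card κ := by
    rw [← hP.rank_matrix, rank_eq_finrank_span_cols, ← hspan, finrank_span_eq_card hlin]
  set σ : κ ≃ κ' := Fintype.equivOfCardEq hcard.symm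
  refine ⟨a ∘ σ, IsUnit.ne_zero ((isUnit_iff_isUnit_det _).1 ?_)⟩
  exact linearIndependent_cols_iff_isUnit.1 (hlin.comp σ σ.injective)

theorem exists_det_submatrix_ne_zero_forall_abs_inv_mul_le_one {κ ι : Type*} [Fintype κ]
    [DecidableEq κ] [Finite ι] {P : Matrix κ ι ℝ} (hP : LinearIndependent ℝ P.row) :
    ∃ e : κ → ι, (P.submatrix id e).det ≠ 0 ∧
      ∀ i j, |((P.submatrix id e)⁻¹ * P) i j| ≤ 1 := by
  classical
  obtain ⟨e₀, he₀⟩ := exists_det_submatrix_ne_zero hP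
  have : Nonempty (κ → ι) := ⟨e₀⟩
  obtain ⟨e, he⟩ := Finite.exists_max fun e : κ → ι => |(P.submatrix id e).det|
  have hpos : 0 < |(P.submatrix id e).det| := (abs_pos.2 he₀).trans_le (he e₀)
  refine ⟨e, abs_pos.1 hpos, fun i j => le_of_mul_le_mul_left ?_ hpos⟩
  -- Cramer's rule: the entry is the quotient of two maximal minors.
  have hcramer : (P.submatrix id e).det * ((P.submatrix id e)⁻¹ * P) i j =
      (P.submatrix id (Function.update e i j)).det := by
    have hupdate : P.submatrix id (Function.update e i j) =
        (P.submatrix id e).updateCol i (P.col j) := by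
      ext k l
      rcases eq_or_ne l i with rfl | hl <;> simp [*]
    rw [hupdate, ← cramer_apply,
      ← det_smul_inv_mulVec_eq_cramer _ _ (abs_pos.1 hpos).isUnit]
    simp [mul_apply, mulVec, dotProduct]
  rw [← abs_mul, hcramer, mul_one]
  exact he _

theorem abs_mulVec_le_card_mul {κ μ : Type*} [Fintype μ] {C : Matrix κ μ ℝ}
    (hC : ∀ i j, |C i j| ≤ 1) {v : μ → ℝ} {K : ℝ} (hv : ∀ j, |v j| ≤ K) (i : κ) :
    |(C *ᵥ v) i| ≤ Fintype.card μ * K := by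
  calc |∑ j, C i j * v j| ≤ ∑ j, |C i j * v j| := Finset.abs_sum_le_sum_abs _ _
    _ ≤ ∑ _j : μ, 1 * K := Finset.sum_le_sum fun j _ => by
        rw [abs_mul]
        exact mul_le_mul (hC i j) (hv j) (abs_nonneg _) zero_le_one
    _ = Fintype.card μ * K := by simp

theorem norm_le_of_fromCols_mulVec_eq_zero {κ μ : Type*} [Fintype κ] [DecidableEq κ] [Fintype μ]
    {A : Matrix κ κ ℝ} (hA : A.det ≠ 0) {B : Matrix κ μ ℝ} (hAB : ∀ i j, |(A⁻¹ * B) i j| ≤ 1)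
    {ω : κ ⊕ μ → ℝ} (hω : fromCols A B *ᵥ ω = 0) {K : ℝ} (hK : 0 ≤ K)
    (hωK : ∀ j, |ω (Sum.inr j)| ≤ K) : ‖ω‖ ≤ Fintype.card (κ ⊕ μ) * K := by
  have hωl : ω ∘ Sum.inl = -((A⁻¹ * B) *ᵥ (ω ∘ Sum.inr)) := by
    rw [fromCols_mulVec] at hω
    rw [← mulVec_mulVec, ← mulVec_neg, ← eq_neg_of_add_eq_zero_left hω, mulVec_mulVec,
      nonsing_inv_mul A hA.isUnit, one_mulVec]
  have hcard : (Fintype.card (κ ⊕ μ) : ℝ) = Fintype.card κ + Fintype.card μ := by simp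
  refine (pi_norm_le_iff_of_nonneg (by positivity)).2 ?_
  rintro (i | j)
  · calc |ω (Sum.inl i)| = |((A⁻¹ * B) *ᵥ (ω ∘ Sum.inr)) i| := by
          rw [← Function.comp_apply (f := ω), hωl, Pi.neg_apply, abs_neg]
      _ ≤ Fintype.card μ * K := abs_mulVec_le_card_mul hAB hωK i
      _ ≤ Fintype.card (κ ⊕ μ) * K := by
          rw [hcard]
          gcongr
          simp
  · have : Nonempty (κ ⊕ μ) := ⟨Sum.inr j⟩
    refine (hωK j).trans (le_mul_of_one_le_left hK ?_)
    exact_mod_cast Fintype.card_pos (α := κ ⊕ μ)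

theorem exists_int_ne_zero_fromCols_mulVec_eq_zero {κ μ : Type*} [Fintype κ] [DecidableEq κ]
    [Fintype μ] [DecidableEq μ] {A : Matrix κ κ ℝ} (hA : A.det ≠ 0) {B : Matrix κ μ ℝ}
    {N : Matrix (κ ⊕ μ) (κ ⊕ μ) ℝ} (hN : N.det ≠ 0) {Z : Matrix κ (κ ⊕ μ) ℤ}
    (hZ : fromCols A B * N = Z.map Int.cast) {K : ℝ} (hK : 0 < K)
    (h : |A.det * N.det| < K ^ Fintype.card μ) :
    ∃ w : κ ⊕ μ → ℤ, w ≠ 0 ∧ fromCols A B *ᵥ (N *ᵥ Int.cast ∘ w) = 0 ∧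
      ∀ j, |(N *ᵥ Int.cast ∘ w) (Sum.inr j)| ≤ K := by
  have hdet : (fromBlocks A B 0 1 * N).det = A.det * N.det := by
    rw [det_mul, det_fromBlocks_zero₂₁, det_one, mul_one]
  obtain ⟨w, hw0, hw⟩ := exists_int_ne_zero_abs_mulVec_lt (hdet ▸ mul_ne_zero hA hN)
    (c := Sum.elim 1 fun _ => K) (by rintro (_ | _) <;> simp [hK]) (by simpa [hdet] using h)
  rw [← mulVec_mulVec, fromBlocks_mulVec, ← fromCols_mulVec, zero_mulVec, zero_add,
    one_mulVec] at hw
  refine ⟨w, hw0, ?_, fun j => (hw (Sum.inr j)).le⟩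
  have hint : fromCols A B *ᵥ (N *ᵥ Int.cast ∘ w) = Int.cast ∘ (Z *ᵥ w) := by
    rw [mulVec_mulVec, hZ]
    ext i
    simp [mulVec, dotProduct]
  rw [hint] at hw ⊢
  ext i
  have habs : |((Z *ᵥ w) i : ℝ)| < 1 := hw (Sum.inl i)
  have hzero : (Z *ᵥ w) i = 0 := Int.abs_lt_one_iff.1 (by exact_mod_cast habs)
  simp [hzero]

/-- The hypothesis `hZ` says that the rows of `P` lie in the lattice dual to `N ℤ^ι`. -/
theorem exists_int_ne_zero_norm_mulVec_le {κ ι : Type*} [Fintype κ] [Fintype ι] [DecidableEq ι]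
    {N : Matrix ι ι ℝ} (hN : N.det ≠ 0) {P : Matrix κ ι ℝ} (hP : LinearIndependent ℝ P.row)
    {Z : Matrix κ ι ℤ} (hZ : P * N = Z.map Int.cast) {K : ℝ} (hK : 0 < K)
    (h : (Fintype.card κ).factorial * (∏ i, ‖P i‖) * |N.det| <
      K ^ (Fintype.card ι - Fintype.card κ)) :
    ∃ w : ι → ℤ, w ≠ 0 ∧ ‖N *ᵥ Int.cast ∘ w‖ ≤ Fintype.card ι * K := by
  classical
  obtain ⟨e, he, hle⟩ := exists_det_submatrix_ne_zero_forall_abs_inv_mul_le_one hP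
  have he_inj : Function.Injective e := fun i j hij => by
    by_contra hne
    exact he (det_zero_of_column_eq hne fun k => congrArg (P k) hij)
  set σ : κ ⊕ ↥(Set.range e)ᶜ ≃ ι :=
    ((Equiv.ofInjective e he_inj).sumCongr (Equiv.refl _)).trans (Equiv.Set.sumCompl _)
  have hσ : P.submatrix id σ = fromCols (P.submatrix id e) (P.submatrix id Subtype.val) := by
    ext i (j | j) <;> simp [σ]
  have hcard : Fintype.card (κ ⊕ ↥(Set.range e)ᶜ) = Fintype.card ι := Fintype.card_congr σ
  have hdet : |(P.submatrix id e).det| ≤ (Fintype.card κ).factorial * ∏ i, ‖P i‖ :=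
    (abs_det_le_factorial_mul_prod_norm _).trans <| by
      gcongr with i
      exact (pi_norm_le_iff_of_nonneg (norm_nonneg _)).2 fun j => norm_le_pi_norm (P i) (e j)
  have hcompl : Fintype.card ↥(Set.range e)ᶜ = Fintype.card ι - Fintype.card κ := by
    rw [← hcard, Fintype.card_sum, Nat.add_sub_cancel_left]
  obtain ⟨w, hw0, hPw, hwK⟩ := exists_int_ne_zero_fromCols_mulVec_eq_zero he
    (B := P.submatrix id Subtype.val) (N := N.submatrix σ σ) (Z := Z.submatrix id σ)
    (by rwa [det_submatrix_equiv_self]) (by rw [← hσ, submatrix_mul_equiv, hZ, submatrix_map]) hK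
    (by
      rw [det_submatrix_equiv_self, abs_mul, hcompl]
      exact lt_of_le_of_lt (by gcongr) h)
  have hw := norm_le_of_fromCols_mulVec_eq_zero he (fun i j => by simpa [mul_apply] using hle i j.1)
    hPw hK.le hwK
  refine ⟨w ∘ σ.symm, fun h0 => hw0 ?_, ?_⟩
  · exact funext fun k => by simpa using congrFun h0 (σ k)
  · rw [hcard, submatrix_mulVec_equiv] at hw
    refine le_trans ((pi_norm_le_iff_of_nonneg (norm_nonneg _)).2 fun i => ?_) hw
    simpa [Function.comp_assoc] using
      norm_le_pi_norm ((N *ᵥ (Int.cast ∘ w) ∘ σ.symm) ∘ σ) (σ.symm i)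

section Hyperbola

variable {E : Type*} [AddCommGroup E] [Module ℝ E] {f g : Seminorm ℝ E} {S : Set E} {ε : ℝ}

theorem exists_linearIndependent_pair_sup_le {l : ℝ} {p : E} (hp : p ∈ S) (hfg : f p ≤ g p)
    (hl0 : 0 < l) (hl1 : l ≤ 1) (hε : 0 < ε) (hεl : 2 * ε ≤ l) (hl : ∀ q ∈ S, l ≤ (f ⊔ g) q)
    (H : ∀ a, ε ≤ a → a ≤ 1 → ∃ q ∈ S, f q ≤ a ∧ g q ≤ ε / a) :
    ∃ q ∈ S, LinearIndependent ℝ ![p, q] ∧ (f ⊔ g) q ≤ 2 * ε / l := by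
  obtain ⟨q, hq, hfq, hgq⟩ := H (2 * ε / l) (by rw [le_div_iff₀ hl0]; nlinarith)
    (by rwa [div_le_one hl0])
  have hgq_lt : g q < l := hgq.trans_lt (by field_simp; norm_num)
  have hfq_ge : l ≤ f q := (le_max_iff.1 (hl q hq)).resolve_right hgq_lt.not_ge
  have hp0 : p ≠ 0 := by
    rintro rfl
    simpa using hl0.trans_le (hl 0 hp)
  refine ⟨q, hq, (LinearIndependent.pair_iff' hp0).2 ?_,
    max_le hfq ((hgq_lt.le.trans hfq_ge).trans hfq)⟩
  rintro a rfl
  have hfg' : f (a • p) ≤ g (a • p) := by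
    simpa only [map_smul_eq_mul] using mul_le_mul_of_nonneg_left hfg (norm_nonneg a)
  linarith

theorem exists_linearIndependent_pair_sup_mul_sup_le (hε : 0 < ε) (hε1 : ε ≤ 1)
    (hS : ∀ p ∈ S, 2 * ε < (f ⊔ g) p)
    (H : ∀ a, ε ≤ a → a ≤ 1 → ∃ p ∈ S, f p ≤ a ∧ g p ≤ ε / a) :
    ∃ p ∈ S, ∃ q ∈ S, LinearIndependent ℝ ![p, q] ∧ (f ⊔ g) p * (f ⊔ g) q ≤ 4 * ε := by
  obtain ⟨p₁, hp₁, hfp₁, hgp₁⟩ := H 1 hε1 le_rfl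
  have hne : (⇑(f ⊔ g : Seminorm ℝ E) '' S).Nonempty := ⟨_, p₁, hp₁, rfl⟩
  set l := sInf (⇑(f ⊔ g : Seminorm ℝ E) '' S)
  have hl (p) (hp : p ∈ S) : l ≤ (f ⊔ g) p :=
    csInf_le ⟨0, by rintro _ ⟨p, -, rfl⟩; exact apply_nonneg (f ⊔ g) p⟩ ⟨p, hp, rfl⟩
  have hεl : 2 * ε ≤ l := le_csInf hne (by rintro _ ⟨p, hp, rfl⟩; exact (hS p hp).le)
  have hl0 : 0 < l := by linarith
  have hl1 : l ≤ 1 := (hl p₁ hp₁).trans (max_le hfp₁ (hgp₁.trans (by rwa [div_one])))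
  obtain ⟨_, ⟨p, hp, rfl⟩, hpl⟩ := exists_lt_of_csInf_lt hne (show l < 2 * l by linarith)
  obtain ⟨q, hq, hpq, hql⟩ :
      ∃ q ∈ S, LinearIndependent ℝ ![p, q] ∧ (f ⊔ g) q ≤ 2 * ε / l := by
    rcases le_total (f p) (g p) with hfg | hgf
    · exact exists_linearIndependent_pair_sup_le hp hfg hl0 hl1 hε hεl hl H
    · rw [sup_comm] at hl ⊢
      refine exists_linearIndependent_pair_sup_le hp hgf hl0 hl1 hε hεl hl fun a ha ha1 => ?_
      have ha0 : 0 < a := hε.trans_le ha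
      obtain ⟨q, hq, hfq, hgq⟩ := H (ε / a) (le_div_self hε.le ha0 ha1) ((div_le_one ha0).2 ha)
      exact ⟨q, hq, by rwa [div_div_cancel₀ hε.ne'] at hgq, hfq⟩
  refine ⟨p, hp, q, hq, hpq, ?_⟩
  calc (f ⊔ g) p * (f ⊔ g) q ≤ (2 * l) * (2 * ε / l) := by gcongr
    _ = 4 * ε := by field_simp; norm_num

theorem exists_linearIndependent_factorial_mul_prod_sup_le (hε : 0 < ε) (hS : 0 ∉ S)
    (H : ∀ a, ε ≤ a → a ≤ 1 → ∃ p ∈ S, f p ≤ a ∧ g p ≤ ε / a) :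
    ∃ k ≤ 2, ∃ P : Fin k → E, (∀ i, P i ∈ S) ∧ LinearIndependent ℝ P ∧
      k.factorial * ∏ i, (f ⊔ g) (P i) ≤ 8 * ε := by
  rcases lt_or_ge 1 ε with hε1 | hε1
  · exact ⟨0, by simp, ![], by simp, linearIndependent_empty_type, by simp; linarith⟩
  by_cases hshort : ∃ p ∈ S, (f ⊔ g) p ≤ 2 * ε
  · obtain ⟨p, hp, hpε⟩ := hshort
    refine ⟨1, by simp, ![p], by simpa, ?_, ?_⟩
    · exact linearIndependent_unique_iff.2 (ne_of_mem_of_not_mem hp hS)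
    · simp only [Nat.factorial_one, Nat.cast_one, one_mul, Finset.univ_unique,
        Finset.prod_singleton, cons_val_fin_one]
      linarith
  · push Not at hshort
    obtain ⟨p, hp, q, hq, hpq, hprod⟩ :=
      exists_linearIndependent_pair_sup_mul_sup_le hε hε1 hshort H
    refine ⟨2, le_rfl, ![p, q], by simp [Fin.forall_fin_two, hp, hq], hpq, ?_⟩
    simp only [Fin.prod_univ_two, cons_val_zero, cons_val_one, Nat.factorial_two]
    push_cast
    linarith

end Hyperbola

theorem normSeminorm_comp_funLeft_inl_sup_inr {μ ν : Type*} [Fintype μ] [Fintype ν]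
    (p : μ ⊕ ν → ℝ) :
    ((normSeminorm ℝ (μ → ℝ)).comp (LinearMap.funLeft ℝ ℝ Sum.inl) ⊔
      (normSeminorm ℝ (ν → ℝ)).comp (LinearMap.funLeft ℝ ℝ Sum.inr)) p = ‖p‖ := by
  refine le_antisymm (max_le ?_ ?_) ((pi_norm_le_iff_of_nonneg (apply_nonneg _ p)).2 ?_)
  · exact (pi_norm_le_iff_of_nonneg (norm_nonneg p)).2 fun i => norm_le_pi_norm p (Sum.inl i)
  · exact (pi_norm_le_iff_of_nonneg (norm_nonneg p)).2 fun j => norm_le_pi_norm p (Sum.inr j)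
  · rintro (i | j)
    · exact le_max_of_le_left (norm_le_pi_norm (p ∘ Sum.inl) i)
    · exact le_max_of_le_right (norm_le_pi_norm (p ∘ Sum.inr) j)

section Transference

variable {μ ν : Type*} [Fintype μ] [Fintype ν] [DecidableEq μ] [DecidableEq ν]
  {Θ : Matrix ν μ ℝ} {V Y : ℝ}

/-- The lattice of approximations `(V x, -Y (Θ x - y))`, for integral `x` and `y`, is the set of
products `z ᵥ* approxMatrix Θ V Y` with integral `z = (x, y)`. -/
def approxMatrix (Θ : Matrix ν μ ℝ) (V Y : ℝ) : Matrix (μ ⊕ ν) (μ ⊕ ν) ℝ :=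
  fromBlocks (V • 1) (-(Y • Θᵀ)) 0 (Y • 1)

/-- The inverse of `approxMatrix Θ V Y`: its products with integral column vectors `(u, v)` are the
approximations `(V⁻¹ (Θᵀ v + u), Y⁻¹ v)`, which form the dual lattice. -/
def dualApproxMatrix (Θ : Matrix ν μ ℝ) (V Y : ℝ) : Matrix (μ ⊕ ν) (μ ⊕ ν) ℝ :=
  fromBlocks (V⁻¹ • 1) (V⁻¹ • Θᵀ) 0 (Y⁻¹ • 1)

theorem vecMul_approxMatrix (z : μ ⊕ ν → ℝ) :
    z ᵥ* approxMatrix Θ V Y =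
      Sum.elim (V • z ∘ Sum.inl) (-(Y • (Θ *ᵥ (z ∘ Sum.inl) - z ∘ Sum.inr))) := by
  simp only [approxMatrix, vecMul_fromBlocks, vecMul_smul, vecMul_one, vecMul_zero, add_zero,
    vecMul_neg, vecMul_transpose, smul_sub, neg_sub, neg_add_eq_sub]

theorem dualApproxMatrix_mulVec (w : μ ⊕ ν → ℝ) :
    dualApproxMatrix Θ V Y *ᵥ w =
      Sum.elim (V⁻¹ • (Θᵀ *ᵥ (w ∘ Sum.inr) + w ∘ Sum.inl)) (Y⁻¹ • w ∘ Sum.inr) := by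
  rw [dualApproxMatrix, fromBlocks_mulVec, smul_mulVec, smul_mulVec, smul_mulVec, one_mulVec,
    one_mulVec, zero_mulVec, zero_add, ← smul_add, add_comm]

theorem norm_dualApproxMatrix_mulVec_le_iff (hV : 0 < V) (hY : 0 < Y) {w : μ ⊕ ν → ℝ} {K : ℝ} :
    ‖dualApproxMatrix Θ V Y *ᵥ w‖ ≤ K ↔
      ‖Θᵀ *ᵥ (w ∘ Sum.inr) + w ∘ Sum.inl‖ ≤ V * K ∧ ‖w ∘ Sum.inr‖ ≤ Y * K := by
  rw [dualApproxMatrix_mulVec, ← normSeminorm_comp_funLeft_inl_sup_inr, ← inv_mul_le_iff₀ hV,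
    ← inv_mul_le_iff₀ hY, ← norm_smul_of_nonneg (inv_nonneg.2 hV.le),
    ← norm_smul_of_nonneg (inv_nonneg.2 hY.le)]
  exact max_le_iff

theorem approxMatrix_mul_dualApproxMatrix (hV : V ≠ 0) (hY : Y ≠ 0) :
    approxMatrix Θ V Y * dualApproxMatrix Θ V Y = 1 := by
  simp [approxMatrix, dualApproxMatrix, fromBlocks_multiply, smul_smul, hV, hY]

theorem det_dualApproxMatrix :
    (dualApproxMatrix Θ V Y).det = (V ^ Fintype.card μ * Y ^ Fintype.card ν)⁻¹ := by
  simp [dualApproxMatrix, det_fromBlocks_zero₂₁, mul_comm]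

theorem exists_linearIndependent_vecMul_approxMatrix (hV : 0 < V) (hY : 0 < Y)
    (H : ∀ a, V ^ Fintype.card μ * Y ^ Fintype.card ν ≤ a → a ≤ 1 →
      ∃ x : μ → ℤ, ∃ y : ν → ℤ, x ≠ 0 ∧ V * ‖(Int.cast ∘ x : μ → ℝ)‖ ≤ a ∧
        Y * ‖Θ *ᵥ (Int.cast ∘ x) - Int.cast ∘ y‖ ≤
          V ^ Fintype.card μ * Y ^ Fintype.card ν / a) :
    ∃ k ≤ 2, ∃ Z : Fin k → μ ⊕ ν → ℤ,
      LinearIndependent ℝ (fun i => (Int.cast ∘ Z i) ᵥ* approxMatrix Θ V Y) ∧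
      k.factorial * ∏ i, ‖(Int.cast ∘ Z i) ᵥ* approxMatrix Θ V Y‖ ≤
        8 * (V ^ Fintype.card μ * Y ^ Fintype.card ν) := by
  set ε := V ^ Fintype.card μ * Y ^ Fintype.card ν
  set f := (normSeminorm ℝ (μ → ℝ)).comp (LinearMap.funLeft ℝ ℝ (Sum.inl : μ → μ ⊕ ν))
  set g := (normSeminorm ℝ (ν → ℝ)).comp (LinearMap.funLeft ℝ ℝ (Sum.inr : ν → μ ⊕ ν))
  have hfg (p : μ ⊕ ν → ℝ) : (f ⊔ g) p = ‖p‖ := normSeminorm_comp_funLeft_inl_sup_inr p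
  set S : Set (μ ⊕ ν → ℝ) :=
    {p | p ≠ 0 ∧ ∃ z : μ ⊕ ν → ℤ, (Int.cast ∘ z) ᵥ* approxMatrix Θ V Y = p}
  have hS (a : ℝ) (ha : ε ≤ a) (ha1 : a ≤ 1) : ∃ p ∈ S, f p ≤ a ∧ g p ≤ ε / a := by
    obtain ⟨x, y, hx, hxa, hya⟩ := H a ha ha1
    set p := (Int.cast ∘ Sum.elim x y) ᵥ* approxMatrix Θ V Y with hp
    rw [vecMul_approxMatrix] at hp
    have hpl : p ∘ Sum.inl = V • (Int.cast ∘ x : μ → ℝ) := by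
      rw [hp, Sum.elim_comp_inl]
      rfl
    have hpr : p ∘ Sum.inr = -(Y • (Θ *ᵥ (Int.cast ∘ x) - Int.cast ∘ y)) := by
      rw [hp, Sum.elim_comp_inr]
      rfl
    refine ⟨p, ⟨fun h0 => hx ?_, Sum.elim x y, rfl⟩, ?_, ?_⟩
    · rw [h0, Pi.zero_comp, eq_comm, smul_eq_zero_iff_right hV.ne'] at hpl
      exact funext fun i => by simpa using congrFun hpl i
    · change ‖p ∘ Sum.inl‖ ≤ a
      rwa [hpl, norm_smul_of_nonneg hV.le]
    · change ‖p ∘ Sum.inr‖ ≤ ε / a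
      rwa [hpr, norm_neg, norm_smul_of_nonneg hY.le]
  obtain ⟨k, hk, P, hPS, hP, hprod⟩ :=
    exists_linearIndependent_factorial_mul_prod_sup_le (by positivity) (fun h => h.1 rfl) hS
  choose _ Z hZ using hPS
  refine ⟨k, hk, Z, ?_⟩
  simp only [hfg] at hprod
  simp only [hZ]
  exact ⟨hP, hprod⟩

end Transference

theorem exists_transpose_approx {μ ν : Type*} [Fintype μ] [Fintype ν] {Θ : Matrix ν μ ℝ}
    {V Y : ℝ} (hd : 3 ≤ Fintype.card μ + Fintype.card ν) (hV : 0 < V) (hY : 0 < Y)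
    (H : ∀ a, V ^ Fintype.card μ * Y ^ Fintype.card ν ≤ a → a ≤ 1 →
      ∃ x : μ → ℤ, ∃ y : ν → ℤ, x ≠ 0 ∧ V * ‖(Int.cast ∘ x : μ → ℝ)‖ ≤ a ∧
        Y * ‖Θ *ᵥ (Int.cast ∘ x) - Int.cast ∘ y‖ ≤
          V ^ Fintype.card μ * Y ^ Fintype.card ν / a) :
    ∃ v : ν → ℤ, ∃ u : μ → ℤ, (v ≠ 0 ∨ u ≠ 0) ∧
      ‖(Int.cast ∘ v : ν → ℝ)‖ ≤ 9 * (Fintype.card μ + Fintype.card ν) * Y ∧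
      ‖Θᵀ *ᵥ (Int.cast ∘ v) - Int.cast ∘ u‖ ≤ 9 * (Fintype.card μ + Fintype.card ν) * V := by
  classical
  have hε : 0 < V ^ Fintype.card μ * Y ^ Fintype.card ν := by positivity
  obtain ⟨k, hk, Z, hP, hprod⟩ := exists_linearIndependent_vecMul_approxMatrix hV hY H
  set P : Matrix (Fin k) (μ ⊕ ν) ℝ :=
    (of Z).map (Int.cast : ℤ → ℝ) * approxMatrix Θ V Y with hPZ
  have hPN : P * dualApproxMatrix Θ V Y = (of Z).map Int.cast := by
    rw [hPZ, Matrix.mul_assoc, approxMatrix_mul_dualApproxMatrix hV.ne' hY.ne', Matrix.mul_one]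
  have hsmall : (Fintype.card (Fin k)).factorial * (∏ i, ‖P i‖) * |(dualApproxMatrix Θ V Y).det| <
      9 ^ (Fintype.card (μ ⊕ ν) - Fintype.card (Fin k)) :=
    calc _ ≤ 8 := by
          rw [det_dualApproxMatrix, abs_of_pos (by positivity), ← div_eq_mul_inv, div_le_iff₀ hε,
            Fintype.card_fin]
          exact hprod
      _ < (9 : ℝ) := by norm_num
      _ ≤ _ := le_self_pow₀ (by norm_num) (by simp; omega)
  obtain ⟨w, hw0, hw⟩ := exists_int_ne_zero_norm_mulVec_le
    (by rw [det_dualApproxMatrix]; positivity) hP hPN (by norm_num) hsmall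
  obtain ⟨hu, hv⟩ := (norm_dualApproxMatrix_mulVec_le_iff hV hY).1 hw
  have hcard : (Fintype.card (μ ⊕ ν) : ℝ) = Fintype.card μ + Fintype.card ν := by simp
  rw [hcard, mul_comm _ (9 : ℝ), mul_comm] at hu hv
  refine ⟨w ∘ Sum.inr, -(w ∘ Sum.inl), ?_, hv, ?_⟩
  · contrapose! hw0
    obtain ⟨hr, hl⟩ := hw0
    rw [← Sum.elim_comp_inl_inr w, hr, neg_eq_zero.1 hl, Sum.elim_zero_zero]
  · have hneg : (Int.cast ∘ (-(w ∘ Sum.inl)) : μ → ℝ) = -(Int.cast ∘ (w ∘ Sum.inl)) := by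
      ext
      simp
    rwa [hneg, sub_neg_eq_add]

theorem one_le_norm_ivec {k : ℕ} {x : Fin k → ℤ} (hx : x ≠ 0) : 1 ≤ ‖ivec x‖ := by
  obtain ⟨i, hi⟩ := Function.ne_iff.1 hx
  calc (1 : ℝ) ≤ |(x i : ℝ)| := by exact_mod_cast Int.one_le_abs hi
    _ ≤ ‖ivec x‖ := norm_le_pi_norm (ivec x) i

section Exponent

variable {n m : ℕ} {Θ : Matrix (Fin n) (Fin m) ℝ} {α β γ : ℝ}

theorem UnifOrdApprox.mono (h : UnifOrdApprox n m Θ γ) (hβγ : β ≤ γ) : UnifOrdApprox n m Θ β := by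
  filter_upwards [h, eventually_ge_atTop 1] with t ⟨x, y, hx, hxt, hyt⟩ ht
  exact ⟨x, y, hx, hxt, hyt.trans (Real.rpow_le_rpow_of_exponent_le ht (neg_le_neg hβγ))⟩

theorem unifOrdApprox_of_lt_oalpha (h : (γ : EReal) < oalpha n m Θ) : UnifOrdApprox n m Θ γ := by
  obtain ⟨_, ⟨γ', rfl, h'⟩, hlt⟩ := lt_sSup_iff.1 h
  exact h'.mono (EReal.coe_lt_coe_iff.1 hlt).le

theorem UnifOrdApprox.le_oalpha (h : UnifOrdApprox n m Θ γ) : (γ : EReal) ≤ oalpha n m Θ :=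
  le_sSup ⟨γ, rfl, h⟩

theorem unifOrdApprox_zero (hm : 0 < m) : UnifOrdApprox n m Θ 0 := by
  filter_upwards [eventually_ge_atTop 1] with t ht
  refine ⟨fun _ => 1, fun i => round ((Θ *ᵥ ivec fun _ => 1) i),
    Function.ne_iff.2 ⟨⟨0, hm⟩, one_ne_zero⟩, ?_, ?_⟩
  · refine (pi_norm_le_iff_of_nonneg (by linarith)).2 fun i => ?_
    simpa [ivec] using ht
  · rw [neg_zero, Real.rpow_zero]
    exact (pi_norm_le_iff_of_nonneg zero_le_one).2 fun i =>
      (abs_sub_round _).trans (by norm_num)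

theorem le_oalpha_of_eventually {C : ℝ} (hC : 0 < C)
    (h : ∀ᶠ Y : ℝ in atTop, ∃ x : Fin m → ℤ, ∃ y : Fin n → ℤ, x ≠ 0 ∧
      ‖ivec x‖ ≤ C * Y ∧ ‖Θ *ᵥ ivec x - ivec y‖ ≤ C * Y ^ (-β)) :
    (β : EReal) ≤ oalpha n m Θ := by
  refine EReal.ge_of_forall_gt_iff_ge.1 fun c hc => UnifOrdApprox.le_oalpha ?_
  have hcβ : 0 < β - c := sub_pos.2 (EReal.coe_lt_coe_iff.1 hc)
  filter_upwards [(tendsto_id.atTop_div_const hC).eventually h, eventually_gt_atTop 0,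
    (tendsto_rpow_atTop hcβ).eventually_ge_atTop (C * C ^ β)]
    with t ⟨x, y, hx, hxt, hyt⟩ ht hCt
  refine ⟨x, y, hx, hxt.trans_eq (mul_div_cancel₀ t hC.ne'), hyt.trans ?_⟩
  calc C * (t / C) ^ (-β) = C * C ^ β * t ^ (-β) := by
        rw [Real.div_rpow ht.le hC.le, Real.rpow_neg hC.le, div_inv_eq_mul]
        ring
    _ ≤ t ^ (β - c) * t ^ (-β) := by gcongr
    _ = t ^ (-c) := by
        rw [← Real.rpow_add ht]
        ring_nf

theorem exists_approx_of_rpow_le_of_le_one {Y : ℝ} (hY : 1 < Y)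
    (h : ∀ t ≥ Y ^ (n - m * β + β), ∃ x : Fin m → ℤ, ∃ y : Fin n → ℤ, x ≠ 0 ∧
      ‖ivec x‖ ≤ t ∧ ‖Θ *ᵥ ivec x - ivec y‖ ≤ t ^ (-α))
    (H : ∀ s : ℝ, n - m * β ≤ s → s ≤ 0 → 1 - α * (s + β) ≤ n - m * β - s)
    {a : ℝ} (ha : Y ^ (n - m * β) ≤ a) (ha1 : a ≤ 1) :
    ∃ x : Fin m → ℤ, ∃ y : Fin n → ℤ, x ≠ 0 ∧ Y ^ (-β) * ‖ivec x‖ ≤ a ∧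
      Y * ‖Θ *ᵥ ivec x - ivec y‖ ≤ Y ^ (n - m * β) / a := by
  have hY0 : 0 < Y := one_pos.trans hY
  have ha0 : 0 < a := (Real.rpow_pos_of_pos hY0 _).trans_le ha
  obtain ⟨s, rfl⟩ : ∃ s, Y ^ s = a := ⟨_, Real.rpow_logb hY0 hY.ne' ha0⟩
  have hs : n - m * β ≤ s := (Real.rpow_le_rpow_left_iff hY).1 ha
  have hs0 : s ≤ 0 := by rwa [← Real.rpow_zero Y, Real.rpow_le_rpow_left_iff hY] at ha1
  obtain ⟨x, y, hx, hxt, hyt⟩ := h (Y ^ (s + β)) (by gcongr; exact hY.le)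
  refine ⟨x, y, hx, ?_, ?_⟩
  · calc Y ^ (-β) * ‖ivec x‖ ≤ Y ^ (-β) * Y ^ (s + β) := by gcongr
      _ = Y ^ s := by rw [← Real.rpow_add hY0]; ring_nf
  · calc Y * ‖Θ *ᵥ ivec x - ivec y‖ ≤ Y * (Y ^ (s + β)) ^ (-α) := by gcongr
      _ = Y ^ (1 - α * (s + β)) := by
          rw [← Real.rpow_mul hY0.le, mul_neg, mul_comm, ← Real.rpow_add_one hY0.ne']
          ring_nf
      _ ≤ Y ^ (n - m * β - s) := Real.rpow_le_rpow_of_exponent_le hY.le (H s hs hs0)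
      _ = Y ^ (n - m * β) / Y ^ s := Real.rpow_sub hY0 _ _

theorem UnifOrdApprox.le_oalpha_transpose (hn : 0 < n) (hd : 3 ≤ m + n)
    (h : UnifOrdApprox n m Θ α) (hτ : 0 < n - m * β + β)
    (H : ∀ s : ℝ, n - m * β ≤ s → s ≤ 0 → 1 - α * (s + β) ≤ n - m * β - s) :
    (β : EReal) ≤ oalpha m n Θᵀ := by
  rcases le_or_gt β 0 with hβ | hβ
  · exact ((unifOrdApprox_zero hn).mono hβ).le_oalpha
  have hC : (0 : ℝ) < 9 * (m + n) := by positivity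
  refine le_oalpha_of_eventually hC ?_
  have hV : Tendsto (fun Y : ℝ => 9 * (m + n) * Y ^ (-β)) atTop (nhds 0) := by
    simpa using (tendsto_rpow_neg_atTop hβ).const_mul (9 * (m + n : ℝ))
  filter_upwards [(tendsto_rpow_atTop hτ).eventually (eventually_forall_ge_atTop.2 h),
    hV.eventually_lt_const one_pos, eventually_gt_atTop 1] with Y happrox hVY hY
  have hY0 : 0 < Y := one_pos.trans hY
  have hε : (Y ^ (-β)) ^ m * Y ^ n = Y ^ (n - m * β) := by
    rw [← Real.rpow_natCast, ← Real.rpow_natCast, ← Real.rpow_mul hY0.le, ← Real.rpow_add hY0]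
    ring_nf
  obtain ⟨v, u, hvu, hv, hu⟩ := exists_transpose_approx (Θ := Θ) (by simpa using hd)
    (Real.rpow_pos_of_pos hY0 (-β)) hY0 fun a ha ha1 => by
      simp only [Fintype.card_fin, hε] at ha ⊢
      exact exists_approx_of_rpow_le_of_le_one hY happrox H ha ha1
  simp only [Fintype.card_fin] at hv hu
  refine ⟨v, u, ?_, hv, hu⟩
  rintro rfl
  refine (hu.trans_lt hVY).not_ge ?_
  have h0 : (Int.cast ∘ (0 : Fin n → ℤ) : Fin n → ℝ) = 0 := by
    ext
    simp
  rw [h0, mulVec_zero, zero_sub, norm_neg]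
  exact one_le_norm_ivec (hvu.resolve_left (· rfl))

theorem UnifOrdApprox.le_oalpha_transpose_of_le_one (hn : 0 < n) (hd : 3 ≤ m + n)
    (h : UnifOrdApprox n m Θ α) (hα : α ≤ 1) (hαm : α < m) :
    (((n - 1) / (m - α) : ℝ) : EReal) ≤ oalpha m n Θᵀ := by
  set β : ℝ := (n - 1) / (m - α)
  have hβ : n - m * β = 1 - α * β := by
    linarith [div_mul_cancel₀ (n - 1 : ℝ) (sub_pos.2 hαm).ne']
  have hβ0 : 0 ≤ β := div_nonneg (sub_nonneg.2 (by exact_mod_cast hn)) (sub_pos.2 hαm).le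
  refine h.le_oalpha_transpose hn hd ?_ fun s _ hs => ?_ <;> rw [hβ]
  · linarith [mul_nonneg (sub_nonneg.2 hα) hβ0]
  · linarith [mul_nonpos_of_nonneg_of_nonpos (sub_nonneg.2 hα) hs]

theorem UnifOrdApprox.le_oalpha_transpose_of_one_le (hn : 0 < n) (hm : 2 ≤ m)
    (h : UnifOrdApprox n m Θ α) (hα : 1 ≤ α) :
    (((n - α⁻¹) / (m - 1) : ℝ) : EReal) ≤ oalpha m n Θᵀ := by
  set β : ℝ := (n - α⁻¹) / (m - 1)
  have hm1 : (0 : ℝ) < m - 1 := sub_pos.2 (by exact_mod_cast hm)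
  have hα0 : 0 < α := one_pos.trans_le hα
  have hβ : n - m * β = α⁻¹ - β := by
    linarith [div_mul_cancel₀ (n - α⁻¹ : ℝ) hm1.ne']
  refine h.le_oalpha_transpose hn (by omega) ?_ fun s hs _ => ?_ <;> rw [hβ] at *
  · simpa using hα0
  · linarith [mul_nonneg (sub_nonneg.2 hα) (sub_nonneg.2 hs), mul_inv_cancel₀ hα0.ne']

theorem oalpha_transpose_ge_of_le_one (hn : 0 < n) (hm : 0 < m) (hd : 3 ≤ m + n)
    (h1 : oalpha n m Θ ≤ 1) (hlt : oalpha n m Θ < (m : EReal)) :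
    oalpha m n Θᵀ ≥ (((n - 1) / (m - (oalpha n m Θ).toReal) : ℝ) : EReal) := by
  have h0 : (0 : EReal) ≤ oalpha n m Θ := (unifOrdApprox_zero hm).le_oalpha
  have hcoe := EReal.coe_toReal hlt.ne_top (EReal.bot_lt_zero.trans_le h0).ne'
  set α := (oalpha n m Θ).toReal
  have hα1 : α ≤ 1 := by rw [← hcoe] at h1; exact_mod_cast h1
  have hαm : α < m := by
    rw [← hcoe, ← EReal.coe_natCast] at hlt
    exact_mod_cast hlt
  have hcont : ContinuousAt (fun γ : ℝ => (((n - 1) / (m - γ) : ℝ) : EReal)) α :=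
    continuous_coe_real_ereal.continuousAt.comp
      (continuousAt_const.div (by fun_prop) (sub_pos.2 hαm).ne')
  refine le_of_tendsto (hcont.mono_left (nhdsWithin_le_nhds (s := Set.Iio α))) ?_
  filter_upwards [self_mem_nhdsWithin] with γ hγ
  have hγ : γ < α := hγ
  refine UnifOrdApprox.le_oalpha_transpose_of_le_one hn hd (unifOrdApprox_of_lt_oalpha ?_)
    (hγ.le.trans hα1) (hγ.trans hαm)
  rw [← hcoe]
  exact_mod_cast hγ

theorem oalpha_transpose_ge_of_one_lt (hn : 0 < n) (hm : 2 ≤ m) (h1 : 1 < oalpha n m Θ) :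
    oalpha m n Θᵀ ≥ (((n - (oalpha n m Θ).toReal⁻¹) / (m - 1) : ℝ) : EReal) := by
  have hlim {l : Filter ℝ} [l.NeBot] {r : ℝ} (hr : Tendsto (·⁻¹) l (nhds r))
      (hl : ∀ᶠ γ : ℝ in l, 1 ≤ γ ∧ (γ : EReal) < oalpha n m Θ) :
      (((n - r) / (m - 1) : ℝ) : EReal) ≤ oalpha m n Θᵀ :=
    le_of_tendsto (EReal.tendsto_coe.2 ((hr.const_sub (n : ℝ)).div_const (m - 1 : ℝ)))
      (hl.mono fun γ hγ =>
        (unifOrdApprox_of_lt_oalpha hγ.2).le_oalpha_transpose_of_one_le hn hm hγ.1)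
  induction hA : oalpha n m Θ with
  | bot => simp [hA] at h1
  | top =>
    rw [EReal.toReal_top, _root_.inv_zero]
    refine hlim tendsto_inv_atTop_zero ?_
    filter_upwards [eventually_ge_atTop 1] with γ hγ
    exact ⟨hγ, hA ▸ EReal.coe_lt_top γ⟩
  | coe α =>
    have hα : 1 < α := by rw [hA] at h1; exact_mod_cast h1
    refine hlim (l := nhdsWithin α (Set.Iio α))
      ((continuousAt_inv₀ (one_pos.trans hα).ne').mono_left nhdsWithin_le_nhds) ?_
    filter_upwards [self_mem_nhdsWithin, Ioo_mem_nhdsLT hα] with γ hγ hγ'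
    exact ⟨hγ'.1.le, hA ▸ EReal.coe_lt_coe_iff.2 hγ⟩

end Exponent

/-- Theorem 4: inequalities between uniform exponents of Θ and ᵗΘ. -/
theorem oalpha_transpose_inequalities (n m : ℕ) (hn : 0 < n) (hm : 0 < m)
    (hnm : ¬(n = 1 ∧ m = 1)) (Θ : Matrix (Fin n) (Fin m) ℝ) :
    (oalpha n m Θ ≤ 1 → oalpha n m Θ < (m : EReal) →
      oalpha m n Θᵀ ≥
        ((((n : ℝ) - 1) / ((m : ℝ) - (oalpha n m Θ).toReal) : ℝ) : EReal)) ∧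
    (1 ≤ oalpha n m Θ → 2 ≤ m →
      oalpha m n Θᵀ ≥
        ((((n : ℝ) - ((oalpha n m Θ).toReal)⁻¹) / ((m : ℝ) - 1) : ℝ) : EReal)) := by
  have hd : 3 ≤ m + n := by omega
  refine ⟨oalpha_transpose_ge_of_le_one hn hm hd, fun h1 h2 => ?_⟩
  rcases h1.eq_or_lt with h1 | h1
  · have hlt : oalpha n m Θ < (m : EReal) := by
      rw [← h1]
      exact_mod_cast h2
    simpa [← h1] using oalpha_transpose_ge_of_le_one hn hm hd h1.ge hlt
  · exact oalpha_transpose_ge_of_one_lt hn h2 h1
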